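/- Let ρ and σ be density matrices on the tensor product ℂ^{d_A} ⊗ ℂ^{d_B} and let p ∈ (0,1). Then H(A|B)_{pρ+(1−p)σ} ≤ p·H(A|B)_ρ + (1−p)·H(A|B)_σ + h₂(p), where h₂(p) = −p·ln p − (1−p)·ln(1−p). -/

import Mathlib

open Matrix

/-- The von Neumann entropy `H(ρ) = Σ_i η(λ_i)` of a matrix, where `λ_i` are
its eigenvalues and `η(x) = −x·ln x` (and `0` if the matrix is not
Hermitian). -/
noncomputable def vnEntropy {n : Type*} [Fintype n] [DecidableEq n]
    (ρ : Matrix n n ℂ) : ℝ :=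
  if h : ρ.IsHermitian then ∑ i, Real.negMulLog (h.eigenvalues i) else 0

/-- Partial trace over the first factor:
`ρ_B(k,l) = Σ_i ρ((i,k),(i,l))`. -/
noncomputable def ptrA {dA dB : ℕ}
    (ρ : Matrix (Fin dA × Fin dB) (Fin dA × Fin dB) ℂ) :
    Matrix (Fin dB) (Fin dB) ℂ :=
  Matrix.of fun k l => ∑ i : Fin dA, ρ (i, k) (i, l)

/-- The quantum conditional entropy `H(A|B)_ρ = H(ρ) − H(ρ_B)`. -/
noncomputable def condEntropy {dA dB : ℕ}
    (ρ : Matrix (Fin dA × Fin dB) (Fin dA × Fin dB) ℂ) : ℝ :=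
  vnEntropy ρ - vnEntropy (ptrA ρ)

/-!
On positive semidefinite matrices the von Neumann entropy `H` is concave: it is the pointwise
minimum, over unitaries `U`, of the concave maps `A ↦ ∑ k, η ((U * A * Uᴴ) k k)`. It is also
subadditive. Indeed `A + B = W * Wᴴ` for `W = [√A √B]`, so `A + B` has the same nonzero spectrum
as the Gram matrix `Wᴴ * W`, whose diagonal blocks are `A` and `B`, and deleting the off-diagonal
blocks averages the matrix with a unitary conjugate of it, which by concavity does not decrease
`H`.

Since `H (p • A) = p * H A + η p * tr A`, subadditivity bounds the entropy of the mixture of the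
joint states from above, and concavity bounds the entropy of the mixture of the marginals from
below.
-/

section DiagEntropy

open scoped ComplexOrder

variable {n : Type*} [Fintype n]

/-- The Shannon entropy of the diagonal of a matrix: for a density matrix, the entropy of the
outcome of a measurement in the standard basis. -/
noncomputable def diagEntropy (A : Matrix n n ℂ) : ℝ :=
  ∑ k, Real.negMulLog (A k k).re

lemma concaveOn_diagEntropy :
    ConcaveOn ℝ {A : Matrix n n ℂ | A.PosSemidef} diagEntropy := by
  refine ⟨fun A hA B hB a b ha hb _ ↦ (hA.smul ha).add (hB.smul hb),
    fun A hA B hB a b ha hb hab ↦ ?_⟩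
  have hdiag {M : Matrix n n ℂ} (hM : M.PosSemidef) (k : n) : 0 ≤ (M k k).re :=
    (Complex.le_def.1 hM.diag_nonneg).1
  simp only [diagEntropy, Finset.smul_sum, ← Finset.sum_add_distrib]
  refine Finset.sum_le_sum fun k _ ↦ ?_
  simpa using Real.concaveOn_negMulLog.2 (hdiag hA k) (hdiag hB k) ha hb hab

end DiagEntropy

section VonNeumannEntropy

open Polynomial Unitary
open scoped ComplexOrder MatrixOrder

variable {m n : Type*} [Fintype m] [DecidableEq m] [Fintype n] [DecidableEq n]
  {A B : Matrix n n ℂ}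

lemma vnEntropy_eq_sum_eigenvalues (hA : A.IsHermitian) :
    vnEntropy A = ∑ i, Real.negMulLog (hA.eigenvalues i) :=
  dif_pos hA

lemma vnEntropy_eq_sum_roots_charpoly (hA : A.IsHermitian) :
    vnEntropy A = (A.charpoly.roots.map fun z ↦ Real.negMulLog z.re).sum := by
  simp [vnEntropy_eq_sum_eigenvalues hA, hA.roots_charpoly_eq_eigenvalues]

lemma vnEntropy_mul_comm {A : Matrix m n ℂ} {B : Matrix n m ℂ}
    (hAB : (A * B).IsHermitian) (hBA : (B * A).IsHermitian) :
    vnEntropy (A * B) = vnEntropy (B * A) := by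
  have hroots : Fintype.card n • {0} + (A * B).charpoly.roots =
      Fintype.card m • {0} + (B * A).charpoly.roots := by
    have hne (M : ℂ[X]) (k : ℕ) (hM : M.Monic) : X ^ k * M ≠ 0 :=
      ((monic_X_pow k).mul hM).ne_zero
    simpa only [roots_mul (hne _ _ (charpoly_monic _)), roots_X_pow]
      using congrArg roots (charpoly_mul_comm' A B)
  rw [vnEntropy_eq_sum_roots_charpoly hAB, vnEntropy_eq_sum_roots_charpoly hBA]
  simpa [Multiset.map_nsmul, Multiset.sum_nsmul] using
    congrArg (fun s ↦ (s.map fun z : ℂ ↦ Real.negMulLog z.re).sum) hroots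

lemma posSemidef_conjStarAlgAut (hA : A.PosSemidef) (U : unitaryGroup n ℂ) :
    (conjStarAlgAut ℂ _ U A).PosSemidef :=
  hA.mul_mul_conjTranspose_same (U : Matrix n n ℂ)

lemma vnEntropy_conjStarAlgAut (hA : A.IsHermitian) (U : unitaryGroup n ℂ) :
    vnEntropy (conjStarAlgAut ℂ _ U A) = vnEntropy A := by
  have hUA : (conjStarAlgAut ℂ _ U A).IsHermitian := IsSelfAdjoint.map hA _
  have hchar : (conjStarAlgAut ℂ _ U A).charpoly = A.charpoly := by
    rw [conjStarAlgAut_apply, charpoly_mul_comm, ← mul_assoc,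
      Unitary.coe_star_mul_self, one_mul]
  rw [vnEntropy_eq_sum_roots_charpoly hUA, vnEntropy_eq_sum_roots_charpoly hA, hchar]

lemma vnEntropy_cfc (hA : A.IsHermitian) (f : ℝ → ℝ) :
    vnEntropy (cfc f A) = ∑ i, Real.negMulLog (f (hA.eigenvalues i)) := by
  have hf : (cfc f A).IsHermitian := cfc_predicate f A
  rw [vnEntropy_eq_sum_roots_charpoly hf, hA.charpoly_cfc_eq,
    roots_prod _ _ (Finset.prod_ne_zero_iff.2 fun i _ ↦ X_sub_C_ne_zero _)]
  simp

lemma vnEntropy_smul (hA : A.IsHermitian) (c : ℝ) :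
    vnEntropy (c • A) = c * vnEntropy A + A.trace.re * Real.negMulLog c := by
  have htr : A.trace.re = ∑ i, hA.eigenvalues i := by
    simp [hA.trace_eq_sum_eigenvalues]
  rw [← cfc_const_mul_id c A hA.isSelfAdjoint, vnEntropy_cfc hA, htr,
    vnEntropy_eq_sum_eigenvalues hA, Finset.mul_sum, Finset.sum_mul, ← Finset.sum_add_distrib]
  exact Finset.sum_congr rfl fun i _ ↦ by rw [Real.negMulLog_mul, add_comm]

lemma vnEntropy_fromBlocks_zero {A : Matrix m m ℂ} (hA : A.IsHermitian) (hB : B.IsHermitian) :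
    vnEntropy (fromBlocks A 0 0 B) = vnEntropy A + vnEntropy B := by
  have hAB : (fromBlocks A 0 0 B).IsHermitian := hA.fromBlocks (by simp) hB
  have hne : A.charpoly * B.charpoly ≠ 0 := (A.charpoly_monic.mul B.charpoly_monic).ne_zero
  rw [vnEntropy_eq_sum_roots_charpoly hAB, vnEntropy_eq_sum_roots_charpoly hA,
    vnEntropy_eq_sum_roots_charpoly hB, charpoly_fromBlocks_zero₁₂, roots_mul hne,
    Multiset.map_add, Multiset.sum_add]

lemma sum_normSq_unitary_row (U : unitaryGroup n ℂ) (k : n) :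
    ∑ i, Complex.normSq (U k i) = 1 := by
  have h : ((U : Matrix n n ℂ) * star (U : Matrix n n ℂ)) k k = 1 := by
    rw [mem_unitaryGroup_iff.1 U.2, one_apply_eq]
  simp only [mul_apply, star_apply, RCLike.star_def, Complex.mul_conj] at h
  exact_mod_cast h

lemma sum_normSq_unitary_col (U : unitaryGroup n ℂ) (i : n) :
    ∑ k, Complex.normSq (U k i) = 1 := by
  simpa using sum_normSq_unitary_row (star U) i

lemma re_diag_eq_sum_normSq_mul_eigenvalues (hA : A.IsHermitian) (k : n) :
    (A k k).re = ∑ i, Complex.normSq (hA.eigenvectorUnitary k i) * hA.eigenvalues i := by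
  conv_lhs => rw [hA.spectral_theorem, conjStarAlgAut_apply, mul_apply, Complex.re_sum]
  refine Finset.sum_congr rfl fun i _ ↦ ?_
  rw [mul_diagonal, star_apply, RCLike.star_def, mul_right_comm, Complex.mul_conj]
  simp

lemma vnEntropy_le_diagEntropy (hA : A.PosSemidef) : vnEntropy A ≤ diagEntropy A := by
  have hH := hA.isHermitian
  let w (k i : n) : ℝ := Complex.normSq (hH.eigenvectorUnitary k i)
  have hjensen (k : n) :
      ∑ i, w k i * Real.negMulLog (hH.eigenvalues i) ≤ Real.negMulLog (A k k).re := by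
    rw [re_diag_eq_sum_normSq_mul_eigenvalues hH]
    exact Real.concaveOn_negMulLog.le_map_sum (fun i _ ↦ Complex.normSq_nonneg _)
      (sum_normSq_unitary_row _ k) (fun i _ ↦ hA.eigenvalues_nonneg i)
  calc vnEntropy A = ∑ i, (∑ k, w k i) * Real.negMulLog (hH.eigenvalues i) := by
        simp only [w, sum_normSq_unitary_col, one_mul, vnEntropy_eq_sum_eigenvalues hH]
    _ = ∑ k, ∑ i, w k i * Real.negMulLog (hH.eigenvalues i) := by
        simp only [Finset.sum_mul]
        exact Finset.sum_comm
    _ ≤ diagEntropy A := Finset.sum_le_sum fun k _ ↦ hjensen k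

lemma exists_diagEntropy_conjStarAlgAut_eq (hA : A.IsHermitian) :
    ∃ U : unitaryGroup n ℂ, diagEntropy (conjStarAlgAut ℂ _ U A) = vnEntropy A :=
  ⟨star hA.eigenvectorUnitary, by
    rw [hA.conjStarAlgAut_star_eigenvectorUnitary, vnEntropy_eq_sum_eigenvalues hA]
    simp [diagEntropy]⟩

lemma vnEntropy_le_diagEntropy_conjStarAlgAut (hA : A.PosSemidef) (U : unitaryGroup n ℂ) :
    vnEntropy A ≤ diagEntropy (conjStarAlgAut ℂ _ U A) := by
  rw [← vnEntropy_conjStarAlgAut hA.isHermitian U]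
  exact vnEntropy_le_diagEntropy (posSemidef_conjStarAlgAut hA U)

lemma concaveOn_vnEntropy : ConcaveOn ℝ {A : Matrix n n ℂ | A.PosSemidef} vnEntropy := by
  refine ⟨concaveOn_diagEntropy.1, fun A hA B hB a b ha hb hab ↦ ?_⟩
  have hAB : (a • A + b • B).PosSemidef := concaveOn_diagEntropy.1 hA hB ha hb hab
  obtain ⟨U, hU⟩ := exists_diagEntropy_conjStarAlgAut_eq hAB.isHermitian
  have hconj : conjStarAlgAut ℂ _ U (a • A + b • B) =
      a • conjStarAlgAut ℂ _ U A + b • conjStarAlgAut ℂ _ U B := by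
    simp only [conjStarAlgAut_apply, mul_add, add_mul, mul_smul_comm, smul_mul_assoc]
  calc a • vnEntropy A + b • vnEntropy B
      ≤ a • diagEntropy (conjStarAlgAut ℂ _ U A) + b • diagEntropy (conjStarAlgAut ℂ _ U B) :=
        add_le_add
          (smul_le_smul_of_nonneg_left (vnEntropy_le_diagEntropy_conjStarAlgAut hA U) ha)
          (smul_le_smul_of_nonneg_left (vnEntropy_le_diagEntropy_conjStarAlgAut hB U) hb)
    _ ≤ diagEntropy (a • conjStarAlgAut ℂ _ U A + b • conjStarAlgAut ℂ _ U B) :=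
        concaveOn_diagEntropy.2 (posSemidef_conjStarAlgAut hA U) (posSemidef_conjStarAlgAut hB U)
          ha hb hab
    _ = vnEntropy (a • A + b • B) := by rw [← hconj, hU]

lemma exists_unitary_average_eq_fromBlocks_toBlocks (G : Matrix (m ⊕ n) (m ⊕ n) ℂ) :
    ∃ V : unitaryGroup (m ⊕ n) ℂ, (1 / 2 : ℝ) • G + (1 / 2 : ℝ) • conjStarAlgAut ℂ _ V G =
      fromBlocks G.toBlocks₁₁ 0 0 G.toBlocks₂₂ := by
  let V : Matrix (m ⊕ n) (m ⊕ n) ℂ := fromBlocks 1 0 0 (-1)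
  have hV_star : star V = V := by simp [V, star_eq_conjTranspose, fromBlocks_conjTranspose]
  have hV : V ∈ unitaryGroup (m ⊕ n) ℂ := by
    simp [mem_unitaryGroup_iff, hV_star, V, fromBlocks_multiply]
  have hconj : V * G * V =
      fromBlocks G.toBlocks₁₁ (-G.toBlocks₁₂) (-G.toBlocks₂₁) G.toBlocks₂₂ := by
    conv_lhs => rw [← fromBlocks_toBlocks G]
    simp [V, fromBlocks_multiply]
  refine ⟨⟨V, hV⟩, ?_⟩
  rw [conjStarAlgAut_apply, hV_star, hconj]
  conv_lhs => enter [1]; rw [← fromBlocks_toBlocks G]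
  norm_num [fromBlocks_smul, fromBlocks_add, ← add_smul]

lemma vnEntropy_le_add_toBlocks {G : Matrix (m ⊕ n) (m ⊕ n) ℂ} (hG : G.PosSemidef) :
    vnEntropy G ≤ vnEntropy G.toBlocks₁₁ + vnEntropy G.toBlocks₂₂ := by
  obtain ⟨V, hV⟩ := exists_unitary_average_eq_fromBlocks_toBlocks G
  calc vnEntropy G
      = (1 / 2 : ℝ) • vnEntropy G + (1 / 2 : ℝ) • vnEntropy (conjStarAlgAut ℂ _ V G) := by
        rw [vnEntropy_conjStarAlgAut hG.isHermitian, ← add_smul, add_halves, one_smul]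
    _ ≤ vnEntropy ((1 / 2 : ℝ) • G + (1 / 2 : ℝ) • conjStarAlgAut ℂ _ V G) :=
        concaveOn_vnEntropy.2 hG (posSemidef_conjStarAlgAut hG V) (by norm_num) (by norm_num)
          (by norm_num)
    _ = vnEntropy (fromBlocks G.toBlocks₁₁ 0 0 G.toBlocks₂₂) := by rw [hV]
    _ = vnEntropy G.toBlocks₁₁ + vnEntropy G.toBlocks₂₂ :=
        vnEntropy_fromBlocks_zero (hG.isHermitian.submatrix Sum.inl)
          (hG.isHermitian.submatrix Sum.inr)

lemma exists_isHermitian_mul_self_eq {ι : Type*} [Fintype ι] {A : Matrix ι ι ℂ}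
    (hA : A.PosSemidef) : ∃ S : Matrix ι ι ℂ, S.IsHermitian ∧ S * S = A := by
  classical
  exact ⟨CFC.sqrt A, (CFC.sqrt_nonneg A).posSemidef.isHermitian,
    CFC.sqrt_mul_sqrt_self A hA.nonneg⟩

lemma vnEntropy_add_le (hA : A.PosSemidef) (hB : B.PosSemidef) :
    vnEntropy (A + B) ≤ vnEntropy A + vnEntropy B := by
  obtain ⟨S, hS, rfl⟩ := exists_isHermitian_mul_self_eq hA
  obtain ⟨T, hT, rfl⟩ := exists_isHermitian_mul_self_eq hB
  let W := fromCols S T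
  have hWW : W * Wᴴ = S * S + T * T := by
    simp [W, conjTranspose_fromCols_eq_fromRows_conjTranspose, fromCols_mul_fromRows, hS.eq, hT.eq]
  have hgram : Wᴴ * W = fromBlocks (S * S) (S * T) (T * S) (T * T) := by
    simp [W, conjTranspose_fromCols_eq_fromRows_conjTranspose, hS.eq, hT.eq]
  calc vnEntropy (S * S + T * T) = vnEntropy (Wᴴ * W) := by
        rw [← hWW, vnEntropy_mul_comm (isHermitian_mul_conjTranspose_self W)
          (isHermitian_conjTranspose_mul_self W)]
    _ ≤ vnEntropy (S * S) + vnEntropy (T * T) := by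
        simpa [hgram] using vnEntropy_le_add_toBlocks (posSemidef_conjTranspose_mul_self W)

end VonNeumannEntropy

section PartialTrace

open scoped ComplexOrder

variable {dA dB : ℕ} {ρ σ : Matrix (Fin dA × Fin dB) (Fin dA × Fin dB) ℂ}

lemma ptrA_eq_sum_submatrix (ρ : Matrix (Fin dA × Fin dB) (Fin dA × Fin dB) ℂ) :
    ptrA ρ = ∑ i, ρ.submatrix (Prod.mk i) (Prod.mk i) := by
  ext k l
  simp [ptrA, Matrix.sum_apply]

lemma ptrA_posSemidef (hρ : ρ.PosSemidef) : (ptrA ρ).PosSemidef := by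
  rw [ptrA_eq_sum_submatrix]
  exact posSemidef_sum _ fun i _ ↦ hρ.submatrix _

lemma ptrA_add (ρ σ : Matrix (Fin dA × Fin dB) (Fin dA × Fin dB) ℂ) :
    ptrA (ρ + σ) = ptrA ρ + ptrA σ := by
  ext k l
  simp [ptrA, Finset.sum_add_distrib]

lemma ptrA_smul (c : ℝ) (ρ : Matrix (Fin dA × Fin dB) (Fin dA × Fin dB) ℂ) :
    ptrA (c • ρ) = c • ptrA ρ := by
  ext k l
  simp [ptrA, Finset.mul_sum]

theorem condEntropy_convex_combination_le_general (hρ : ρ.PosSemidef) (hσ : σ.PosSemidef)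
    {p : ℝ} (hp0 : 0 ≤ p) (hp1 : p ≤ 1) :
    condEntropy (p • ρ + (1 - p) • σ) ≤ p * condEntropy ρ + (1 - p) * condEntropy σ +
      (ρ.trace.re * Real.negMulLog p + σ.trace.re * Real.negMulLog (1 - p)) := by
  have hq0 : 0 ≤ 1 - p := sub_nonneg.2 hp1
  have hjoint : vnEntropy (p • ρ + (1 - p) • σ) ≤
      (p * vnEntropy ρ + ρ.trace.re * Real.negMulLog p) +
        ((1 - p) * vnEntropy σ + σ.trace.re * Real.negMulLog (1 - p)) := by
    rw [← vnEntropy_smul hρ.isHermitian, ← vnEntropy_smul hσ.isHermitian]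
    exact vnEntropy_add_le (hρ.smul hp0) (hσ.smul hq0)
  have hmarginal : p * vnEntropy (ptrA ρ) + (1 - p) * vnEntropy (ptrA σ) ≤
      vnEntropy (p • ptrA ρ + (1 - p) • ptrA σ) :=
    concaveOn_vnEntropy.2 (ptrA_posSemidef hρ) (ptrA_posSemidef hσ) hp0 hq0
      (add_sub_cancel p 1)
  simp only [condEntropy, ptrA_add, ptrA_smul]
  linarith

end PartialTrace

open scoped ComplexOrder in
/-- Near-concavity of the quantum conditional entropy:
`H(A|B)_{pρ+(1−p)σ} ≤ p·H(A|B)_ρ + (1−p)·H(A|B)_σ + h₂(p)`. -/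
theorem condEntropy_convex_combination_le {dA dB : ℕ}
    (ρ σ : Matrix (Fin dA × Fin dB) (Fin dA × Fin dB) ℂ)
    (hρ : ρ.PosSemidef) (hρ_tr : ρ.trace = 1)
    (hσ : σ.PosSemidef) (hσ_tr : σ.trace = 1)
    (p : ℝ) (hp0 : 0 < p) (hp1 : p < 1) :
    condEntropy (p • ρ + (1 - p) • σ) ≤
      p * condEntropy ρ + (1 - p) * condEntropy σ +
        (-(p * Real.log p) - (1 - p) * Real.log (1 - p)) := by
  simpa only [hρ_tr, hσ_tr, Complex.one_re, one_mul, Real.negMulLog, neg_mul, ← sub_eq_add_neg]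
    using condEntropy_convex_combination_le_general hρ hσ hp0.le hp1.le
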